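/- arXiv:1904.02452 — 7 statements merged into one kernel-verified Lean document; each statement's English description precedes it below -/
import Mathlib

section
/- Fix n ≥ 1. For A ∈ SE(3) and an n-tuple Q = (Q₁, …, Qₙ) of elements of SOT(3), define the map Υ((A, Q), (P, η)) := (P·A, (P·A·Q₁⁻¹·P⁻¹·η₁, …, P·A·Qₙ⁻¹·P⁻¹·ηₙ)) on pairs (P, η) where P ∈ SE(3) and η = (η₁, …, ηₙ) is an n-tuple of nonzero vectors in ℝ⁴. Then Υ is a right group action of the direct product group SE(3) × SOT(3)ⁿ: (i) Υ((I₄, (I₄, …, I₄)), (P, η)) = (P, η) for every (P, η); and (ii) for all (A₁, Q⁽¹⁾), (A₂, Q⁽²⁾) in SE(3) × SOT(3)ⁿ, Υ((A₁, Q⁽¹⁾), Υ((A₂, Q⁽²⁾), (P, η))) = Υ((A₂·A₁, (Q₁⁽²⁾·Q₁⁽¹⁾, …, Qₙ⁽²⁾·Qₙ⁽¹⁾)), (P, η)). -/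
/-!
Part (i) is `P * P⁻¹ = 1`. In part (ii) the inner factor `(P * A₂)⁻¹ * (P * A₂)` cancels, leaving
`P * A₂ * A₁ * (Q₁ i)⁻¹ * (Q₂ i)⁻¹ * P⁻¹`, and `(Q₁ i)⁻¹ * (Q₂ i)⁻¹ = (Q₂ i * Q₁ i)⁻¹`. Both
cancellations rest on `det_eq_one_of_mem_SE3set`.
-/

open Matrix

noncomputable section

/-- The homogeneous `SE(3)` matrix `[[R, x], [0, 1]]`. -/
def seMat (R : Matrix (Fin 3) (Fin 3) ℝ) (x : Fin 3 → ℝ) : Matrix (Fin 4) (Fin 4) ℝ :=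
  Matrix.reindex finSumFinEquiv finSumFinEquiv
    (Matrix.fromBlocks R (Matrix.of fun i (_ : Fin 1) => x i) (0 : Matrix (Fin 1) (Fin 3) ℝ) (1 : Matrix (Fin 1) (Fin 1) ℝ))

/-- The set `SE(3)` of rigid-body transformation matrices. -/
def SE3set : Set (Matrix (Fin 4) (Fin 4) ℝ) :=
  {M | ∃ (R : Matrix (Fin 3) (Fin 3) ℝ) (x : Fin 3 → ℝ),
    Rᵀ * R = 1 ∧ R.det = 1 ∧ M = seMat R x}

/-- The block-diagonal matrix `diag(R, a)`. -/
def sotMat (R : Matrix (Fin 3) (Fin 3) ℝ) (a : ℝ) : Matrix (Fin 4) (Fin 4) ℝ :=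
  Matrix.reindex finSumFinEquiv finSumFinEquiv
    (Matrix.fromBlocks R 0 0 (a • (1 : Matrix (Fin 1) (Fin 1) ℝ)))

/-- The set `SOT(3)` of scaled orthogonal transformations, as `4 × 4` matrices. -/
def SOT3set : Set (Matrix (Fin 4) (Fin 4) ℝ) :=
  {M | ∃ (R : Matrix (Fin 3) (Fin 3) ℝ) (a : ℝ),
    Rᵀ * R = 1 ∧ R.det = 1 ∧ a ≠ 0 ∧ M = sotMat R a}

/-- The map `Υ((A, Q), (P, η)) = (P·A, (P·A·Qᵢ⁻¹·P⁻¹·ηᵢ)ᵢ)`. -/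
def Upsilon {n : ℕ} (A : Matrix (Fin 4) (Fin 4) ℝ) (Q : Fin n → Matrix (Fin 4) (Fin 4) ℝ)
    (P : Matrix (Fin 4) (Fin 4) ℝ) (η : Fin n → Fin 4 → ℝ) :
    Matrix (Fin 4) (Fin 4) ℝ × (Fin n → Fin 4 → ℝ) :=
  (P * A, fun i => (P * A * (Q i)⁻¹ * P⁻¹) *ᵥ η i)

theorem det_eq_one_of_mem_SE3set {M : Matrix (Fin 4) (Fin 4) ℝ} (hM : M ∈ SE3set) :
    M.det = 1 := by
  obtain ⟨R, x, -, hdet, rfl⟩ := hM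
  unfold seMat
  rw [Matrix.det_reindex_self, Matrix.det_fromBlocks_zero₂₁, hdet, Matrix.det_one, one_mul]

/-- `Υ` is a right action of `SE(3) × SOT(3)ⁿ` on pairs `(P, η)`:
the group identity acts trivially, and composition reverses order. -/
theorem stmt_3 (n : ℕ) (hn : 1 ≤ n)
    (A₁ A₂ : Matrix (Fin 4) (Fin 4) ℝ) (hA₁ : A₁ ∈ SE3set) (hA₂ : A₂ ∈ SE3set)
    (Q₁ Q₂ : Fin n → Matrix (Fin 4) (Fin 4) ℝ)
    (hQ₁ : ∀ i, Q₁ i ∈ SOT3set) (hQ₂ : ∀ i, Q₂ i ∈ SOT3set)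
    (P : Matrix (Fin 4) (Fin 4) ℝ) (hP : P ∈ SE3set)
    (η : Fin n → Fin 4 → ℝ) (hη : ∀ i, η i ≠ 0) :
    Upsilon (1 : Matrix (Fin 4) (Fin 4) ℝ) (fun _ => (1 : Matrix (Fin 4) (Fin 4) ℝ)) P η
        = (P, η) ∧
    Upsilon A₁ Q₁ (Upsilon A₂ Q₂ P η).1 (Upsilon A₂ Q₂ P η).2
        = Upsilon (A₂ * A₁) (fun i => Q₂ i * Q₁ i) P η := by
  have hPu : IsUnit P.det := by simp [det_eq_one_of_mem_SE3set hP]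
  have hPAu : IsUnit (P * A₂).det := by
    simp [det_eq_one_of_mem_SE3set hP, det_eq_one_of_mem_SE3set hA₂]
  constructor
  · simp [Upsilon, Matrix.mul_nonsing_inv P hPu]
  · refine Prod.ext (Matrix.mul_assoc P A₂ A₁) (funext fun i => ?_)
    simp only [Upsilon, Matrix.mulVec_mulVec]
    congr 1
    calc P * A₂ * A₁ * (Q₁ i)⁻¹ * (P * A₂)⁻¹ * (P * A₂ * (Q₂ i)⁻¹ * P⁻¹)
        = P * A₂ * A₁ * (Q₁ i)⁻¹ * ((P * A₂)⁻¹ * (P * A₂)) * ((Q₂ i)⁻¹ * P⁻¹) := by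
          simp only [Matrix.mul_assoc]
      _ = P * (A₂ * A₁) * (Q₂ i * Q₁ i)⁻¹ * P⁻¹ := by
          rw [Matrix.nonsing_inv_mul _ hPAu, Matrix.mul_inv_rev (Q₂ i)]
          simp only [Matrix.mul_assoc, Matrix.one_mul]
end
end

section
/- Let x, y ∈ ℝ⁴ \ {0} and write x = (x₁, x₂, x₃, x₄), x_{1:3} = (x₁, x₂, x₃), and similarly for y. There exist Q ∈ SOT(3) and c ∈ ℝ \ {0} with Q·x = c·y if and only if exactly one of the following holds: (a) x₄ ≠ 0, x_{1:3} ≠ 0, y₄ ≠ 0 and y_{1:3} ≠ 0; or (b) x₄ = 0 and y₄ = 0; or (c) x_{1:3} = 0 and y_{1:3} = 0. In other words, the action of SOT(3) on ℝP³ has exactly three orbits: the point-type elements ℝP³_p = {[x] : x₄ ≠ 0, x_{1:3} ≠ 0}, the bearing-type elements ℝP³_b = {[x] : x₄ = 0}, and the singleton ℝP³₀ = {[e₄]}. -/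
/-!
The matrix `diag(R, a)` acts separately on the spatial part and on the last coordinate, and both
actions are injective, so vanishing of either part is an invariant of the orbit; this gives the
forward direction. Conversely, the last coordinate is adjusted by the free scalar `a`, so it
remains to see that rotations act transitively on lines of `ℝ³` (`exists_rotation`). After
rescaling `v` to have the length of `u`, the half-turn about the axis `u + v` sends `u` to `v`;
if `u + v = 0`, then `u` and `v` already span the same line.
-/

open Matrix

noncomputable section

lemma sotMat_mulVec (R : Matrix (Fin 3) (Fin 3) ℝ) (a : ℝ) (x : Fin 4 → ℝ) (i : Fin 3) :
    (sotMat R a *ᵥ x) i.castSucc = (R *ᵥ ![x 0, x 1, x 2]) i := by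
  have h (j : Fin 3) : finSumFinEquiv.symm (j.castSucc : Fin (3 + 1)) = Sum.inl j :=
    finSumFinEquiv_symm_apply_castAdd j
  have h0 : finSumFinEquiv.symm (0 : Fin (3 + 1)) = Sum.inl (0 : Fin 3) := rfl
  have h1 : finSumFinEquiv.symm (1 : Fin (3 + 1)) = Sum.inl (1 : Fin 3) := rfl
  have h2 : finSumFinEquiv.symm (2 : Fin (3 + 1)) = Sum.inl (2 : Fin 3) := rfl
  have h3 : finSumFinEquiv.symm (3 : Fin (3 + 1)) = Sum.inr (0 : Fin 1) := rfl
  simp [sotMat, Matrix.mulVec, dotProduct, Fin.sum_univ_four, Fin.sum_univ_three, h, h0, h1, h2,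
    h3]

lemma sotMat_mulVec_last (R : Matrix (Fin 3) (Fin 3) ℝ) (a : ℝ) (x : Fin 4 → ℝ) :
    (sotMat R a *ᵥ x) 3 = a * x 3 := by
  have h0 : finSumFinEquiv.symm (0 : Fin (3 + 1)) = Sum.inl (0 : Fin 3) := rfl
  have h1 : finSumFinEquiv.symm (1 : Fin (3 + 1)) = Sum.inl (1 : Fin 3) := rfl
  have h2 : finSumFinEquiv.symm (2 : Fin (3 + 1)) = Sum.inl (2 : Fin 3) := rfl
  have h3 : finSumFinEquiv.symm (3 : Fin (3 + 1)) = Sum.inr (0 : Fin 1) := rfl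
  simp [sotMat, Matrix.mulVec, dotProduct, Fin.sum_univ_four, h0, h1, h2, h3]

lemma sotMat_mulVec_eq_iff (R : Matrix (Fin 3) (Fin 3) ℝ) (a c : ℝ) (x y : Fin 4 → ℝ) :
    sotMat R a *ᵥ x = c • y ↔
      R *ᵥ ![x 0, x 1, x 2] = c • ![y 0, y 1, y 2] ∧ a * x 3 = c * y 3 := by
  constructor
  · intro h
    refine ⟨?_, ?_⟩
    · ext i
      rw [← sotMat_mulVec R a x i, h]
      fin_cases i <;> rfl
    · rw [← sotMat_mulVec_last R a x, h]
      rfl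
  · rintro ⟨h, h'⟩
    ext i
    refine Fin.lastCases ?_ (fun j => ?_) i
    · exact (sotMat_mulVec_last R a x).trans h'
    · rw [sotMat_mulVec, h]
      fin_cases j <;> rfl

/-- The half-turn about the axis spanned by `w`, namely `2 w wᵀ / |w|² - 1`. -/
def halfTurn (w : Fin 3 → ℝ) : Matrix (Fin 3) (Fin 3) ℝ :=
  (2 / (w ⬝ᵥ w)) • vecMulVec w w - 1

lemma halfTurn_orthogonal (w : Fin 3 → ℝ) (hw : w ≠ 0) :
    (halfTurn w)ᵀ * halfTurn w = 1 := by
  have hs : w ⬝ᵥ w ≠ 0 := by rwa [Ne, dotProduct_self_eq_zero]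
  simp only [halfTurn, transpose_sub, transpose_smul, transpose_vecMulVec, transpose_one, sub_mul,
    mul_sub, smul_mul_assoc, mul_smul_comm, vecMulVec_mul_vecMulVec, one_mul, mul_one]
  ext i j
  simp [vecMulVec_apply]
  field_simp
  ring

lemma halfTurn_det (w : Fin 3 → ℝ) (hw : w ≠ 0) : (halfTurn w).det = 1 := by
  have hs : w ⬝ᵥ w ≠ 0 := by rwa [Ne, dotProduct_self_eq_zero]
  have hk : (2 / (w ⬝ᵥ w)) * (w 0 * w 0 + w 1 * w 1 + w 2 * w 2) = 2 := by
    rw [← Fin.sum_univ_three (fun i => w i * w i)]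
    exact div_mul_cancel₀ 2 hs
  rw [halfTurn, det_fin_three]
  generalize 2 / (w ⬝ᵥ w) = k at hk
  simp [vecMulVec_apply]
  linear_combination hk

/-- For `u`, `v` of equal length, `u` is carried to `v` by the half-turn about their bisector. -/
lemma halfTurn_mulVec (u v : Fin 3 → ℝ) (h : u ⬝ᵥ u = v ⬝ᵥ v) (hw : u + v ≠ 0) :
    halfTurn (u + v) *ᵥ u = v := by
  have hs : (u + v) ⬝ᵥ (u + v) ≠ 0 := by rwa [Ne, dotProduct_self_eq_zero]
  -- Equality of lengths gives `|u + v|² = 2 ⟨u + v, u⟩`.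
  have h2 : (2 / ((u + v) ⬝ᵥ (u + v))) * ((u + v) ⬝ᵥ u) = 1 := by
    rw [div_mul_eq_mul_div, div_eq_one_iff_eq hs]
    simp only [add_dotProduct, dotProduct_add, dotProduct_comm v u]
    linarith
  ext i
  simp only [halfTurn, sub_mulVec, smul_mulVec, vecMulVec_mulVec, one_mulVec, Pi.sub_apply,
    Pi.smul_apply, Pi.add_apply, smul_eq_mul, MulOpposite.smul_eq_mul_unop, MulOpposite.unop_op]
  linear_combination (u i + v i) * h2

/-- Rotations act transitively on lines through the origin of `ℝ³`. -/
lemma exists_rotation (u v : Fin 3 → ℝ) (hu : u ≠ 0) (hv : v ≠ 0) :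
    ∃ (R : Matrix (Fin 3) (Fin 3) ℝ) (c : ℝ),
      Rᵀ * R = 1 ∧ R.det = 1 ∧ c ≠ 0 ∧ R *ᵥ u = c • v := by
  have pos (w : Fin 3 → ℝ) (hw : w ≠ 0) : 0 < w ⬝ᵥ w :=
    lt_of_le_of_ne (Finset.sum_nonneg fun i _ => mul_self_nonneg (w i))
      (Ne.symm (by rwa [Ne, dotProduct_self_eq_zero]))
  have hpu := pos u hu
  have hpv := pos v hv
  set k := √(u ⬝ᵥ u / v ⬝ᵥ v) with hk
  have hk0 : 0 < k := Real.sqrt_pos.2 (div_pos hpu hpv)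
  have hkk : k * k = u ⬝ᵥ u / v ⬝ᵥ v := Real.mul_self_sqrt (div_pos hpu hpv).le
  have hlen : u ⬝ᵥ u = (k • v) ⬝ᵥ (k • v) := by
    rw [smul_dotProduct, dotProduct_smul, smul_eq_mul, smul_eq_mul, ← mul_assoc, hkk,
      div_mul_cancel₀ _ hpv.ne']
  by_cases hw : u + k • v = 0
  · refine ⟨1, -k, by simp, by simp, neg_ne_zero.2 hk0.ne', ?_⟩
    rw [one_mulVec, neg_smul]
    exact eq_neg_of_add_eq_zero_left hw
  · exact ⟨halfTurn (u + k • v), k, halfTurn_orthogonal _ hw, halfTurn_det _ hw, hk0.ne',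
      halfTurn_mulVec _ _ hlen hw⟩

lemma spatial_ne_zero (x : Fin 4 → ℝ) (hx : x ≠ 0) (h : x 3 = 0) :
    (![x 0, x 1, x 2] : Fin 3 → ℝ) ≠ 0 := by
  contrapose! hx
  have h0 := congrFun hx 0
  have h1 := congrFun hx 1
  have h2 := congrFun hx 2
  ext i
  fin_cases i <;> assumption

/-- Two nonzero vectors of `ℝ⁴` lie in the same orbit of the `SOT(3)` action on `ℝP³`
iff they are both point-type (with nonzero spatial part), both bearing-type, or both
represent the origin `[e₄]`: the action has exactly three orbits. -/
theorem stmt_4 (x y : Fin 4 → ℝ) (hx : x ≠ 0) (hy : y ≠ 0) :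
    (∃ Q ∈ SOT3set, ∃ c : ℝ, c ≠ 0 ∧ Q *ᵥ x = c • y) ↔
      ((x 3 ≠ 0 ∧ (![x 0, x 1, x 2] : Fin 3 → ℝ) ≠ 0 ∧
        y 3 ≠ 0 ∧ (![y 0, y 1, y 2] : Fin 3 → ℝ) ≠ 0) ∨
       (x 3 = 0 ∧ y 3 = 0) ∨
       ((![x 0, x 1, x 2] : Fin 3 → ℝ) = 0 ∧ (![y 0, y 1, y 2] : Fin 3 → ℝ) = 0)) := by
  have sx := spatial_ne_zero x hx
  have sy := spatial_ne_zero y hy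
  constructor
  · rintro ⟨_, ⟨R, a, hR, -, ha, rfl⟩, c, hc, h⟩
    obtain ⟨h1, h2⟩ := (sotMat_mulVec_eq_iff R a c x y).1 h
    have hlast : x 3 = 0 ↔ y 3 = 0 := by
      rw [← mul_eq_zero_iff_left ha, mul_comm, mul_comm _ a, h2]
      simp [hc]
    have hspat : (![x 0, x 1, x 2] : Fin 3 → ℝ) = 0 ↔ (![y 0, y 1, y 2] : Fin 3 → ℝ) = 0 := by
      constructor
      · intro h0
        rw [h0, mulVec_zero] at h1
        exact (smul_eq_zero.1 h1.symm).resolve_left hc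
      · intro h0
        rw [h0, smul_zero] at h1
        rw [← one_mulVec ![x 0, x 1, x 2], ← hR, ← mulVec_mulVec, h1, mulVec_zero]
    tauto
  · intro h
    -- It suffices to match the spatial parts and the vanishing of the last coordinate.
    have key : ∀ (R : Matrix (Fin 3) (Fin 3) ℝ) (c : ℝ), Rᵀ * R = 1 → R.det = 1 → c ≠ 0 →
        R *ᵥ ![x 0, x 1, x 2] = c • ![y 0, y 1, y 2] → (x 3 = 0 ↔ y 3 = 0) →
        ∃ Q ∈ SOT3set, ∃ c : ℝ, c ≠ 0 ∧ Q *ᵥ x = c • y := by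
      intro R c hR hd hc h1 h2
      by_cases h3 : x 3 = 0
      · exact ⟨_, ⟨R, 1, hR, hd, one_ne_zero, rfl⟩, c, hc,
          (sotMat_mulVec_eq_iff _ _ _ _ _).2 ⟨h1, by simp [h3, h2.1 h3]⟩⟩
      · exact ⟨_, ⟨R, c * y 3 / x 3, hR, hd,
          div_ne_zero (mul_ne_zero hc fun h4 => h3 (h2.2 h4)) h3, rfl⟩, c, hc,
          (sotMat_mulVec_eq_iff _ _ _ _ _).2 ⟨h1, div_mul_cancel₀ _ h3⟩⟩
    rcases h with ⟨h1, h2, h3, h4⟩ | ⟨h1, h2⟩ | ⟨h1, h2⟩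
    · obtain ⟨R, c, hR, hd, hc, h⟩ := exists_rotation _ _ h2 h4
      exact key R c hR hd hc h (by tauto)
    · obtain ⟨R, c, hR, hd, hc, h⟩ := exists_rotation _ _ (sx h1) (sy h2)
      exact key R c hR hd hc h (by tauto)
    · exact key 1 1 (by simp) (by simp) one_ne_zero (by simp [h1, h2]) (by tauto)
end
end

section
/- Let Ω, V ∈ ℝ³, let U = [[Ω×, V], [0, 0]] ∈ ℝ⁴ˣ⁴, and let θ = (q; r) ∈ ℝ⁴ with q ∈ ℝ³ \ {0} and r ∈ ℝ. With W(Ω, V, q, r) := [[(Ω − r·(V × q)/|q|²)×, 0], [0, −r·(Vᵀq)/|q|²]], one has the identity U·θ − W(Ω, V, q, r)·θ = (r·(Vᵀq)/|q|²)·θ. In particular U·θ and W(Ω, V, q, r)·θ differ by a scalar multiple of θ, so Π̄_θ·(U − W(Ω, V, q, r))·θ = 0. -/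
/-!
By the triple product identity `(V × q) × q = (V·q) q − |q|² V`, the rotational correction in `W`
turns `r V` into `r (V·q)/|q|² q`, while the last entry of `W` supplies the same multiple of `r`.
So `(U − W) θ` is a multiple of `θ`, which the projector `Π̄_θ` annihilates since `θ ≠ 0`. The
identity is verified coordinatewise from the entries of `U` and `W`.
-/

open Matrix

noncomputable section

/-- The skew-symmetric matrix `Ω×` of `Ω ∈ ℝ³`, satisfying `Ω× v = Ω × v`. -/
def skew (Ω : Fin 3 → ℝ) : Matrix (Fin 3) (Fin 3) ℝ :=
  !![0, -Ω 2, Ω 1; Ω 2, 0, -Ω 0; -Ω 1, Ω 0, 0]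

/-- The projector `Π̄_x = I₄ − (x xᵀ)/|x|²`. -/
def proj4 (x : Fin 4 → ℝ) : Matrix (Fin 4) (Fin 4) ℝ :=
  1 - (x ⬝ᵥ x)⁻¹ • vecMulVec x x

/-- The element `U = [[Ω×, V], [0, 0]]` of `se(3)` in homogeneous `4 × 4` form. -/
def seAlgMat (Ω V : Fin 3 → ℝ) : Matrix (Fin 4) (Fin 4) ℝ :=
  Matrix.reindex finSumFinEquiv finSumFinEquiv
    (Matrix.fromBlocks (skew Ω) (Matrix.of fun i (_ : Fin 1) => V i)
      (0 : Matrix (Fin 1) (Fin 3) ℝ) (0 : Matrix (Fin 1) (Fin 1) ℝ))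

/-- The lift matrix `W(Ω, V, q, r) = [[(Ω − r(V × q)/|q|²)×, 0], [0, −r(Vᵀq)/|q|²]]`. -/
def Wmat (Ω V q : Fin 3 → ℝ) (r : ℝ) : Matrix (Fin 4) (Fin 4) ℝ :=
  Matrix.reindex finSumFinEquiv finSumFinEquiv
    (Matrix.fromBlocks
      (skew (Ω - (r / (q ⬝ᵥ q)) • (crossProduct V q)))
      (0 : Matrix (Fin 3) (Fin 1) ℝ) (0 : Matrix (Fin 1) (Fin 3) ℝ)
      ((-(r * (V ⬝ᵥ q) / (q ⬝ᵥ q))) • (1 : Matrix (Fin 1) (Fin 1) ℝ)))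

/-- Entrywise form of `U`. -/
lemma seAlgMat_eq (Ω V : Fin 3 → ℝ) :
    seAlgMat Ω V = !![0, -Ω 2, Ω 1, V 0; Ω 2, 0, -Ω 0, V 1; -Ω 1, Ω 0, 0, V 2; 0, 0, 0, 0] := by
  ext i j
  fin_cases i <;> fin_cases j <;> rfl

/-- Entrywise form of `W`, with its rotational part `Ω − r(V × q)/|q|²` abbreviated to `A`. -/
lemma Wmat_eq (Ω V q : Fin 3 → ℝ) (r : ℝ) (A : Fin 3 → ℝ)
    (hA : A = Ω - (r / (q ⬝ᵥ q)) • (crossProduct V q)) :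
    Wmat Ω V q r = !![0, -A 2, A 1, 0; A 2, 0, -A 0, 0; -A 1, A 0, 0, 0;
      0, 0, 0, -(r * (V ⬝ᵥ q) / (q ⬝ᵥ q))] := by
  subst hA
  ext i j
  fin_cases i <;> fin_cases j <;> first | rfl | exact mul_one _

/-- The projector `Π̄_x` annihilates `x`. -/
lemma proj4_mulVec_self (x : Fin 4 → ℝ) (hx : x ⬝ᵥ x ≠ 0) : proj4 x *ᵥ x = 0 := by
  ext i
  simp [proj4, sub_mulVec, smul_mulVec, vecMulVec_mulVec]
  field_simp
  ring

/-- `U·θ − W·θ` is a scalar multiple of `θ`, namely `(r(Vᵀq)/|q|²)·θ`; consequently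
`Π̄_θ (U − W) θ = 0`. -/
theorem stmt_6 (Ω V q : Fin 3 → ℝ) (hq : q ≠ 0) (r : ℝ) :
    seAlgMat Ω V *ᵥ ![q 0, q 1, q 2, r] - Wmat Ω V q r *ᵥ ![q 0, q 1, q 2, r]
        = (r * (V ⬝ᵥ q) / (q ⬝ᵥ q)) • ![q 0, q 1, q 2, r] ∧
    proj4 ![q 0, q 1, q 2, r] *ᵥ ((seAlgMat Ω V - Wmat Ω V q r) *ᵥ ![q 0, q 1, q 2, r]) = 0 := by
  have hqq : q ⬝ᵥ q ≠ 0 := fun h => hq (dotProduct_self_eq_zero.mp h)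
  have key : seAlgMat Ω V *ᵥ ![q 0, q 1, q 2, r] - Wmat Ω V q r *ᵥ ![q 0, q 1, q 2, r]
      = (r * (V ⬝ᵥ q) / (q ⬝ᵥ q)) • ![q 0, q 1, q 2, r] := by
    rw [seAlgMat_eq, Wmat_eq Ω V q r _ rfl]
    have hn : q ⬝ᵥ q = q 0 * q 0 + q 1 * q 1 + q 2 * q 2 := by
      simp [dotProduct, Fin.sum_univ_three]
    have hv : V ⬝ᵥ q = V 0 * q 0 + V 1 * q 1 + V 2 * q 2 := by
      simp [dotProduct, Fin.sum_univ_three]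
    -- `n` stays opaque while denominators are cleared; `hn` then closes the cubic identities.
    generalize q ⬝ᵥ q = n at hn hqq ⊢
    rw [hv]
    ext i
    fin_cases i <;>
      simp [mulVec, dotProduct, Fin.sum_univ_four, cross_apply] <;> field_simp <;>
      rw [hn] <;> ring
  refine ⟨key, ?_⟩
  have hθ : ![q 0, q 1, q 2, r] ⬝ᵥ ![q 0, q 1, q 2, r] ≠ 0 := by
    intro h
    have h0 := dotProduct_self_eq_zero.mp h
    apply hq
    ext i
    fin_cases i
    · exact congrFun h0 0
    · exact congrFun h0 1
    · exact congrFun h0 2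
  rw [sub_mulVec, key, mulVec_smul, proj4_mulVec_self _ hθ, smul_zero]
end
end

section
/- Let P ∈ SE(3), let Ω, V ∈ ℝ³ and U = [[Ω×, V], [0, 0]] ∈ ℝ⁴ˣ⁴, and let η ∈ ℝ⁴ \ {0} be such that the first three components q of θ := P⁻¹·η are nonzero; write θ = (q; r). Then, with W(Ω, V, q, r) := [[(Ω − r·(V × q)/|q|²)×, 0], [0, −r·(Vᵀq)/|q|²]], the lift condition holds: Π̄_η · (P·U·P⁻¹ − P·W(Ω, V, q, r)·P⁻¹) · η = 0. -/
/-! Put `θ = P⁻¹ η = (q; r)` and `c = r (Vᵀq) / |q|²`. The identity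
`(V × q) × q = (Vᵀq) q − |q|² V` gives `(U − W) θ = c θ` (`seAlgMat_sub_Wmat_mulVec`): the
angular correction in `W` removes the part of `r V` orthogonal to `q`, and the scaling component
accounts for the last coordinate. Since `P` is invertible, conjugating by `P` turns this into
`(P U P⁻¹ − P W P⁻¹) η = c η`, and `Π̄_η` annihilates multiples of `η`. -/

open Matrix

noncomputable section

theorem isUnit_det_of_mem_SE3set {P : Matrix (Fin 4) (Fin 4) ℝ} (hP : P ∈ SE3set) :
    IsUnit P.det := by
  obtain ⟨R, x, -, hdet, rfl⟩ := hP
  rw [seMat, Matrix.det_reindex_self, Matrix.det_fromBlocks_zero₂₁, hdet]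
  simp

theorem proj4_mulVec_smul_self {η : Fin 4 → ℝ} (hη : η ≠ 0) (c : ℝ) :
    proj4 η *ᵥ (c • η) = 0 := by
  have h : η ⬝ᵥ η ≠ 0 := fun h => hη (dotProduct_self_eq_zero.mp h)
  rw [Matrix.mulVec_smul, proj4, Matrix.sub_mulVec, Matrix.one_mulVec, Matrix.smul_mulVec,
    Matrix.vecMulVec_mulVec]
  ext i
  simp [h]

/-- The vector `θ = (q; r)` is an eigenvector of `U − W(Ω, V, q, r)`. -/
theorem seAlgMat_sub_Wmat_mulVec (Ω V q : Fin 3 → ℝ) (r : ℝ) (θ : Fin 4 → ℝ)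
    (hθ : q = ![θ 0, θ 1, θ 2]) (hr : r = θ 3) (hq : q ≠ 0) :
    (seAlgMat Ω V - Wmat Ω V q r) *ᵥ θ = (r * (V ⬝ᵥ q) / (q ⬝ᵥ q)) • θ := by
  have h : q ⬝ᵥ q ≠ 0 := fun h => hq (dotProduct_self_eq_zero.mp h)
  have e : q ⬝ᵥ q = θ 0 ^ 2 + θ 1 ^ 2 + θ 2 ^ 2 := by
    simp [hθ, dotProduct, Fin.sum_univ_three, sq]
  have e' : V ⬝ᵥ q = V 0 * θ 0 + V 1 * θ 1 + V 2 * θ 2 := by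
    simp [hθ, dotProduct, Fin.sum_univ_three]
  have s0 : (finSumFinEquiv (m := 3) (n := 1)).symm 0 = Sum.inl 0 := by decide
  have s1 : (finSumFinEquiv (m := 3) (n := 1)).symm 1 = Sum.inl 1 := by decide
  have s2 : (finSumFinEquiv (m := 3) (n := 1)).symm 2 = Sum.inl 2 := by decide
  have s3 : (finSumFinEquiv (m := 3) (n := 1)).symm 3 = Sum.inr 0 := by decide
  have q0 : q 0 = θ 0 := by simp [hθ]
  have q1 : q 1 = θ 1 := by simp [hθ]
  have q2 : q 2 = θ 2 := by simp [hθ]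
  simp only [seAlgMat, Wmat]
  rw [e] at h
  rw [e, e', hr]
  ext i
  fin_cases i <;>
    simp [Matrix.mulVec, dotProduct, Fin.sum_univ_four, s0, s1, s2, s3, skew, crossProduct,
      q0, q1, q2] <;>
    field_simp <;> ring

/-- The lift condition: with `θ = P⁻¹η = (q; r)` and `q ≠ 0`,
`Π̄_η (P U P⁻¹ − P W(Ω,V,q,r) P⁻¹) η = 0`. -/
theorem stmt_7 (P : Matrix (Fin 4) (Fin 4) ℝ) (hP : P ∈ SE3set)
    (Ω V : Fin 3 → ℝ) (η : Fin 4 → ℝ) (hη : η ≠ 0)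
    (q : Fin 3 → ℝ) (r : ℝ)
    (hqdef : q = ![(P⁻¹ *ᵥ η) 0, (P⁻¹ *ᵥ η) 1, (P⁻¹ *ᵥ η) 2])
    (hrdef : r = (P⁻¹ *ᵥ η) 3) (hq : q ≠ 0) :
    proj4 η *ᵥ ((P * seAlgMat Ω V * P⁻¹ - P * Wmat Ω V q r * P⁻¹) *ᵥ η) = 0 := by
  have hdet := isUnit_det_of_mem_SE3set hP
  have key : (P * seAlgMat Ω V * P⁻¹ - P * Wmat Ω V q r * P⁻¹) *ᵥ η
      = (r * (V ⬝ᵥ q) / (q ⬝ᵥ q)) • η := by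
    rw [← Matrix.sub_mul, ← Matrix.mul_sub, ← Matrix.mulVec_mulVec, ← Matrix.mulVec_mulVec,
      seAlgMat_sub_Wmat_mulVec Ω V q r _ hqdef hrdef hq, Matrix.mulVec_smul,
      Matrix.mulVec_mulVec, Matrix.mul_nonsing_inv P hdet, Matrix.one_mulVec]
  rw [key]
  exact proj4_mulVec_smul_self hη _
end
end

section
/- Let Σ be a 3×3 real symmetric positive-definite matrix, let Ω, e ∈ ℝ³, let y ∈ ℝ³ \ {0}, and let k, k_G, k_H be real numbers with k > 1/2, k_G > 0, k_H > 0. Then eᵀ Σ⁻¹ (−Ω× e − k·k_G·Σ Π_y Π_y e) − (1/2)·eᵀ Σ⁻¹ (Σ Ω× − Ω× Σ + k_H·I₃ − k_G·Σ Π_y Π_y Σ) Σ⁻¹ e ≤ −(k_H/2)·|Σ⁻¹ e|². -/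
/-!
With `z = S⁻¹ e`, symmetry of `S` turns every `eᵀ S⁻¹ v` into `zᵀ v` and every `zᵀ S v` into `eᵀ v`.
Skew-symmetry of `Ω×` gives `zᵀ (S Ω× - Ω× S) z = -2 zᵀ Ω× e`, so the `Ω`-terms cancel. Since `Π_y`
is symmetric, `eᵀ Π_y Π_y e = |Π_y e|²`, and the left-hand side equals
`-(k - 1/2) k_G |Π_y e|² - (k_H / 2) |z|²`, whose first summand is nonpositive.
-/

open Matrix

noncomputable section

/-- The projector `Π_y = I₃ − (y yᵀ)/|y|²`. -/
def proj3 (y : Fin 3 → ℝ) : Matrix (Fin 3) (Fin 3) ℝ :=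
  1 - (y ⬝ᵥ y)⁻¹ • vecMulVec y y

lemma proj3_transpose (y : Fin 3 → ℝ) : (proj3 y)ᵀ = proj3 y := by
  simp [proj3, transpose_vecMulVec]

lemma dotProduct_skew_mulVec (Ω u v : Fin 3 → ℝ) :
    u ⬝ᵥ (skew Ω *ᵥ v) = -(v ⬝ᵥ (skew Ω *ᵥ u)) := by
  simp [skew, Matrix.mulVec, dotProduct, Fin.sum_univ_three]
  ring

lemma dotProduct_mulVec_of_transpose_eq {A : Matrix (Fin 3) (Fin 3) ℝ} (hA : Aᵀ = A)
    (u v : Fin 3 → ℝ) : u ⬝ᵥ (A *ᵥ v) = (A *ᵥ u) ⬝ᵥ v := by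
  rw [dotProduct_mulVec, ← mulVec_transpose, hA]

/-- The Lyapunov derivative bound for a point-type landmark:
`eᵀS⁻¹(−Ω×e − k k_G Σ Π_y Π_y e) − ½ eᵀS⁻¹(ΣΩ× − Ω×Σ + k_H I − k_G Σ Π_y Π_y Σ)S⁻¹e
  ≤ −(k_H/2)|S⁻¹e|²`. -/
theorem stmt_8 (S : Matrix (Fin 3) (Fin 3) ℝ) (hSsymm : Sᵀ = S) (hSpos : S.PosDef)
    (Ω e : Fin 3 → ℝ) (y : Fin 3 → ℝ) (hy : y ≠ 0)
    (k kG kH : ℝ) (hk : k > 1/2) (hkG : kG > 0) (hkH : kH > 0) :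
    e ⬝ᵥ (S⁻¹ *ᵥ (-(skew Ω *ᵥ e) - (k * kG) • ((S * proj3 y * proj3 y) *ᵥ e)))
      - (1/2) * (e ⬝ᵥ (S⁻¹ *ᵥ
          ((S * skew Ω - skew Ω * S + kH • (1 : Matrix (Fin 3) (Fin 3) ℝ)
              - kG • (S * proj3 y * proj3 y * S)) *ᵥ (S⁻¹ *ᵥ e))))
      ≤ -(kH / 2) * ((S⁻¹ *ᵥ e) ⬝ᵥ (S⁻¹ *ᵥ e)) := by
  have hinv : (S⁻¹)ᵀ = S⁻¹ := by rw [transpose_nonsing_inv, hSsymm]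
  have hdet : IsUnit S.det := (isUnit_iff_isUnit_det S).mp hSpos.isUnit
  have hSz : S *ᵥ (S⁻¹ *ᵥ e) = e := by
    rw [mulVec_mulVec, mul_nonsing_inv S hdet, one_mulVec]
  simp only [dotProduct_mulVec_of_transpose_eq hinv e]
  generalize S⁻¹ *ᵥ e = z at hSz ⊢
  have hS : ∀ v, z ⬝ᵥ (S *ᵥ v) = e ⬝ᵥ v := fun v => by
    rw [dotProduct_mulVec_of_transpose_eq hSsymm, hSz]
  have hP : e ⬝ᵥ (proj3 y *ᵥ (proj3 y *ᵥ e)) = (proj3 y *ᵥ e) ⬝ᵥ (proj3 y *ᵥ e) :=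
    dotProduct_mulVec_of_transpose_eq (proj3_transpose y) _ _
  simp only [sub_mulVec, add_mulVec, smul_mulVec, one_mulVec, ← mulVec_mulVec, hSz,
    dotProduct_sub, dotProduct_add, dotProduct_neg, dotProduct_smul, smul_eq_mul, hS, hP]
  rw [dotProduct_skew_mulVec Ω e z]
  have hnn : 0 ≤ (proj3 y *ᵥ e) ⬝ᵥ (proj3 y *ᵥ e) := by
    simpa using dotProduct_star_self_nonneg (proj3 y *ᵥ e)
  have hmain := mul_nonneg (mul_nonneg (sub_nonneg.mpr hk.le) hkG.le) hnn
  linarith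
end
end

section
/- Let k > 0 and 0 ≤ ε < 1, and let l : ℝ → ℝ be a differentiable function such that for all t ≥ 0, 0 ≤ l(t) ≤ ε and l′(t) = −k·(1 − l(t))·l(t). Then for all t ≥ 0, l(t) ≤ l(0)·exp(−k·(1 − ε)·t). In particular l(t) → 0 exponentially as t → ∞. -/
/-! Since `l ≤ ε` and `l ≥ 0`, the equation gives `l' ≤ -k(1 - ε)l` on `[0, ∞)`. Hence the
integrating-factor product `l(t) · exp(k(1 - ε)t)` has nonpositive derivative there and is
antitone, so it is at most its value `l(0)` at `t = 0`. -/

/-- Exponential decay for the bearing-landmark storage function: if `0 ≤ l ≤ ε < 1` on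
`[0, ∞)` and `l' = −k(1 − l)l` with `k > 0`, then `l(t) ≤ l(0)·exp(−k(1 − ε)t)`. -/
theorem stmt_10 (k ε : ℝ) (hk : 0 < k) (hε0 : 0 ≤ ε) (hε1 : ε < 1)
    (l : ℝ → ℝ) (hl : Differentiable ℝ l)
    (hbound : ∀ t : ℝ, 0 ≤ t → 0 ≤ l t ∧ l t ≤ ε)
    (hderiv : ∀ t : ℝ, 0 ≤ t → deriv l t = -k * (1 - l t) * l t) :
    ∀ t : ℝ, 0 ≤ t → l t ≤ l 0 * Real.exp (-k * (1 - ε) * t) := by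
  intro t ht
  have hd : ∀ s, HasDerivAt (fun s => l s * Real.exp (k * (1 - ε) * s))
      (deriv l s * Real.exp (k * (1 - ε) * s)
        + l s * (Real.exp (k * (1 - ε) * s) * (k * (1 - ε) * 1))) s := fun s =>
    (hl s).hasDerivAt.mul ((hasDerivAt_id s).const_mul (k * (1 - ε))).exp
  have hanti : AntitoneOn (fun s => l s * Real.exp (k * (1 - ε) * s)) (Set.Ici 0) := by
    apply antitoneOn_of_deriv_nonpos (convex_Ici 0)
    · exact fun s _ => (hd s).continuousAt.continuousWithinAt
    · exact fun s _ => (hd s).differentiableAt.differentiableWithinAt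
    · intro s hs
      rw [interior_Ici] at hs
      have hs0 : 0 ≤ s := le_of_lt hs
      obtain ⟨h0, h1⟩ := hbound s hs0
      rw [(hd s).deriv, hderiv s hs0]
      have hp : 0 ≤ k * l s * (ε - l s) * Real.exp (k * (1 - ε) * s) :=
        mul_nonneg (mul_nonneg (mul_nonneg hk.le h0) (sub_nonneg.2 h1)) (Real.exp_pos _).le
      linarith
  have h := hanti Set.self_mem_Ici (Set.mem_Ici.2 ht) ht
  simp only [mul_zero, Real.exp_zero, mul_one] at h
  rw [show -k * (1 - ε) * t = -(k * (1 - ε) * t) by ring, Real.exp_neg, ← div_eq_mul_inv,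
    le_div_iff₀ (Real.exp_pos _)]
  exact h
end

section
/- Let θ ∈ ℝ⁴ \ {0}, write θ_{1:3} ∈ ℝ³ for its first three components and θ₄ for its fourth component, let Δ_R, Δ_x ∈ ℝ³, let Δ_Q ∈ ℝ⁴ˣ⁴, and let a ∈ ℝ \ {0}. Define M(θ) := [[−(θ_{1:3})×, θ₄·I₃], [0, 0]] ∈ ℝ⁴ˣ⁴ˣ(acting on the stacked vector (Δ_R; Δ_x) ∈ ℝ⁶) and the cost term c(θ) := (1/|θ|)·|Π̄_θ·(M(θ)·(Δ_R; Δ_x) + Δ_Q·θ)|. Then c(a·θ) = c(θ), i.e. the cost defining the pose innovation is invariant under rescaling θ ↦ a·θ of the landmark representative. -/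
/-!
The projector is homogeneous of degree 0 in `θ`, and the vector it is applied to is homogeneous
of degree 1, so the norm in the cost scales by `|a|`; the prefactor `1/|θ|` scales by `|a|⁻¹`.
-/

open Matrix

noncomputable section

/-- The vector `M(θ)·(Δ_R; Δ_x) ∈ ℝ⁴`, where `M(θ) = [[−(θ_{1:3})×, θ₄ I₃], [0, 0]]`
acts on the stacked vector `(Δ_R; Δ_x) ∈ ℝ⁶`. -/
def Mvec (θ : Fin 4 → ℝ) (ΔR Δx : Fin 3 → ℝ) : Fin 4 → ℝ :=
  ![(θ 3 • Δx - crossProduct ![θ 0, θ 1, θ 2] ΔR) 0,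
    (θ 3 • Δx - crossProduct ![θ 0, θ 1, θ 2] ΔR) 1,
    (θ 3 • Δx - crossProduct ![θ 0, θ 1, θ 2] ΔR) 2, 0]

/-- One summand `c(θ) = (1/|θ|)·|Π̄_θ (M(θ)(Δ_R; Δ_x) + Δ_Q θ)|` of the least-squares
cost defining the pose innovation. -/
def poseCost (ΔR Δx : Fin 3 → ℝ) (ΔQ : Matrix (Fin 4) (Fin 4) ℝ) (θ : Fin 4 → ℝ) : ℝ :=
  (Real.sqrt (θ ⬝ᵥ θ))⁻¹ *
    Real.sqrt ((proj4 θ *ᵥ (Mvec θ ΔR Δx + ΔQ *ᵥ θ)) ⬝ᵥ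
               (proj4 θ *ᵥ (Mvec θ ΔR Δx + ΔQ *ᵥ θ)))

/-- The projector depends only on the line spanned by its argument. -/
theorem proj4_smul (a : ℝ) (ha : a ≠ 0) (x : Fin 4 → ℝ) : proj4 (a • x) = proj4 x := by
  have h : (a * (a * (x ⬝ᵥ x)))⁻¹ * (a * a) = (x ⬝ᵥ x)⁻¹ := by
    rw [← mul_assoc a a, mul_inv, mul_right_comm, inv_mul_cancel₀ (mul_ne_zero ha ha), one_mul]
  simp only [proj4, smul_dotProduct, dotProduct_smul, smul_vecMulVec, vecMulVec_smul, smul_smul,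
    smul_eq_mul]
  rw [← h]

theorem Mvec_smul (a : ℝ) (θ : Fin 4 → ℝ) (ΔR Δx : Fin 3 → ℝ) :
    Mvec (a • θ) ΔR Δx = a • Mvec θ ΔR Δx := by
  ext i
  fin_cases i <;> simp [Mvec, cross_apply] <;> ring

theorem sqrt_smul_dotProduct_smul (a : ℝ) (x : Fin 4 → ℝ) :
    Real.sqrt ((a • x) ⬝ᵥ (a • x)) = |a| * Real.sqrt (x ⬝ᵥ x) := by
  rw [smul_dotProduct, dotProduct_smul, smul_eq_mul, smul_eq_mul, ← mul_assoc,
    Real.sqrt_mul (mul_self_nonneg a), Real.sqrt_mul_self_eq_abs]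

/-- The pose-innovation cost is invariant under rescaling `θ ↦ a·θ` of the landmark
representative, so it is well-defined on projective classes `[θ] ∈ ℝP³`. -/
theorem stmt_11 (θ : Fin 4 → ℝ) (hθ : θ ≠ 0) (ΔR Δx : Fin 3 → ℝ)
    (ΔQ : Matrix (Fin 4) (Fin 4) ℝ) (a : ℝ) (ha : a ≠ 0) :
    poseCost ΔR Δx ΔQ (a • θ) = poseCost ΔR Δx ΔQ θ := by
  have hv : Mvec (a • θ) ΔR Δx + ΔQ *ᵥ (a • θ) = a • (Mvec θ ΔR Δx + ΔQ *ᵥ θ) := by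
    rw [Mvec_smul, mulVec_smul, smul_add]
  have ha' : |a| ≠ 0 := abs_ne_zero.mpr ha
  unfold poseCost
  rw [hv, proj4_smul a ha, mulVec_smul, sqrt_smul_dotProduct_smul, sqrt_smul_dotProduct_smul,
    mul_inv, mul_mul_mul_comm, inv_mul_cancel₀ ha', one_mul]
end
end
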